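/- arXiv:1012.0675 — 2 statements merged into one kernel-verified Lean document; each statement's English description precedes it below -/
import Mathlib

section
/- (Sufficiency direction of the cross fibering principle.) Let μ be a σ-finite measure on a measurable space X, let ν be a σ-finite measure on a measurable space Y, and let S ⊂ X × Y be (μ × ν)-measurable. If for μ-almost every x ∈ X the fiber S_x is ν-trivial and for ν-almost every y ∈ Y the fiber S^y is μ-trivial, then S is (μ × ν)-trivial, i.e. (μ × ν)(S) = 0 or (μ × ν)((X × Y) \ S) = 0. -/
open MeasureTheory Filter

/-!
Since almost every fiber `S_x` is trivial, Fubini shows that `S` agrees a.e. with the cylinder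
`A × Y`, where `A` consists of the `x` whose fiber has null complement; symmetrically, `S` agrees
a.e. with a cylinder `X × B`. Hence, for almost every `x`, the truth value of `y ∈ B` is that of
`x ∈ A` for almost every `y`. One such `x` suffices to see that `B` is trivial, and then so is `S`.
-/

section

variable {X Y Z : Type*} [MeasurableSpace X] [MeasurableSpace Y] {μ : Measure X} {ν : Measure Y}

theorem eventuallyConst_ae_set_iff {s : Set X} :
    EventuallyConst s (ae μ) ↔ μ s = 0 ∨ μ sᶜ = 0 := by
  rw [eventuallyConst_set', ae_eq_empty, ae_eq_univ]

theorem eventuallyConst_comp_snd_of_comp_fst_ae_eq [SFinite ν] {f : X → Z} {g : Y → Z}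
    (h : f ∘ Prod.fst =ᵐ[μ.prod ν] g ∘ Prod.snd) :
    EventuallyConst (g ∘ Prod.snd) (ae (μ.prod ν)) := by
  obtain rfl | hμ := eq_zero_or_neZero μ
  · simp
  · obtain ⟨x, hx⟩ : ∃ x, ∀ᵐ y ∂ν, f x = g y := (Measure.ae_ae_of_ae_prod h).exists
    have hg : (fun _ ↦ f x) =ᵐ[ν] g := hx
    exact (EventuallyConst.const (f x)).congr (Measure.quasiMeasurePreserving_snd.ae_eq_comp hg)

theorem exists_ae_eq_fst_preimage_of_measurableSet [SFinite ν] {S : Set (X × Y)}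
    (hS : MeasurableSet S) (h : ∀ᵐ x ∂μ, EventuallyConst {y | (x, y) ∈ S} (ae ν)) :
    ∃ A : Set X, S =ᵐ[μ.prod ν] Prod.fst ⁻¹' A := by
  let A : Set X := {x | ∀ᵐ y ∂ν, (x, y) ∈ S}
  have hA : MeasurableSet A :=
    measurable_measure_prodMk_left hS.compl (measurableSet_singleton 0)
  have hSA : MeasurableSet {z : X × Y | z ∈ S ↔ z.1 ∈ A} := hS.iff (measurable_fst hA)
  refine ⟨A, eventuallyEq_set.2 ((Measure.ae_prod_iff_ae_ae hSA).2 ?_)⟩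
  filter_upwards [h] with x hx
  by_cases hxA : x ∈ A
  · have hfull : ∀ᵐ y ∂ν, (x, y) ∈ S := hxA
    exact hfull.mono fun y hy ↦ iff_of_true hy hxA
  · have hnull : ∀ᵐ y ∂ν, (x, y) ∉ S := (eventuallyConst_set.1 hx).resolve_left hxA
    exact hnull.mono fun y hy ↦ iff_of_false hy hxA

theorem exists_ae_eq_fst_preimage [SFinite ν] {S : Set (X × Y)}
    (hS : NullMeasurableSet S (μ.prod ν))
    (h : ∀ᵐ x ∂μ, EventuallyConst {y | (x, y) ∈ S} (ae ν)) :
    ∃ A : Set X, S =ᵐ[μ.prod ν] Prod.fst ⁻¹' A := by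
  obtain ⟨T, hT, hST⟩ := hS
  have hT_fibers : ∀ᵐ x ∂μ, EventuallyConst {y | (x, y) ∈ T} (ae ν) := by
    filter_upwards [h, Measure.ae_ae_eq_curry_of_prod hST] with x hx hSTx using hx.congr hSTx
  obtain ⟨A, hA⟩ := exists_ae_eq_fst_preimage_of_measurableSet hT hT_fibers
  exact ⟨A, hST.trans hA⟩

theorem exists_ae_eq_snd_preimage [SFinite μ] [SFinite ν] {S : Set (X × Y)}
    (hS : NullMeasurableSet S (μ.prod ν))
    (h : ∀ᵐ y ∂ν, EventuallyConst {x | (x, y) ∈ S} (ae μ)) :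
    ∃ B : Set Y, S =ᵐ[μ.prod ν] Prod.snd ⁻¹' B := by
  have hswap : NullMeasurableSet (Prod.swap ⁻¹' S) (ν.prod μ) :=
    hS.preimage Measure.measurePreserving_swap.quasiMeasurePreserving
  obtain ⟨B, hB⟩ := exists_ae_eq_fst_preimage hswap h
  exact ⟨B, Measure.measurePreserving_swap.quasiMeasurePreserving.preimage_ae_eq hB⟩

theorem cross_fibering_sufficiency_general [SFinite μ] [SFinite ν] {S : Set (X × Y)}
    (hS : NullMeasurableSet S (μ.prod ν))
    (hX : ∀ᵐ x ∂μ, ν {y | (x, y) ∈ S} = 0 ∨ ν {y | (x, y) ∈ S}ᶜ = 0)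
    (hY : ∀ᵐ y ∂ν, μ {x | (x, y) ∈ S} = 0 ∨ μ {x | (x, y) ∈ S}ᶜ = 0) :
    (μ.prod ν) S = 0 ∨ (μ.prod ν) Sᶜ = 0 := by
  simp only [← eventuallyConst_ae_set_iff] at hX hY ⊢
  obtain ⟨A, hA⟩ := exists_ae_eq_fst_preimage hS hX
  obtain ⟨B, hB⟩ := exists_ae_eq_snd_preimage hS hY
  have hAB : Prod.fst ⁻¹' A =ᵐ[μ.prod ν] Prod.snd ⁻¹' B := hA.symm.trans hB
  exact (eventuallyConst_comp_snd_of_comp_fst_ae_eq hAB).congr hB.symm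

end

/-- Sufficiency direction of the cross fibering principle: for σ-finite measures
`μ` on `X` and `ν` on `Y` and a `μ × ν`-measurable set `S ⊆ X × Y`, if `μ`-a.e.
fiber `S_x` is `ν`-trivial and `ν`-a.e. fiber `S^y` is `μ`-trivial, then `S` is
`μ × ν`-trivial, i.e. `(μ × ν)(S) = 0` or `(μ × ν)((X × Y) \ S) = 0`. -/
theorem cross_fibering_sufficiency {X Y : Type*} [MeasurableSpace X] [MeasurableSpace Y]
    (μ : Measure X) (ν : Measure Y) [SigmaFinite μ] [SigmaFinite ν]
    (S : Set (X × Y)) (hS : NullMeasurableSet S (μ.prod ν))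
    (hX : ∀ᵐ x ∂μ, ν {y | (x, y) ∈ S} = 0 ∨ ν {y | (x, y) ∈ S}ᶜ = 0)
    (hY : ∀ᵐ y ∂ν, μ {x | (x, y) ∈ S} = 0 ∨ μ {x | (x, y) ∈ S}ᶜ = 0) :
    (μ.prod ν) S = 0 ∨ (μ.prod ν) Sᶜ = 0 :=
  cross_fibering_sufficiency_general hS hX hY
end

section
/- Let n ≥ 1 and let ψ : ℕ → [0,∞) be a non-negative function. If the n-dimensional Lebesgue measure of D^×_n(ψ) is positive, then it equals 1; similarly, if the n-dimensional Lebesgue measure of S^×_n(ψ) is positive, then it equals 1. -/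
open MeasureTheory Filter

/-- The distance from a real number `y` to the nearest integer:
`‖y‖ = min {|y - p| : p ∈ ℤ}`. -/
noncomputable def distNearestInt (y : ℝ) : ℝ := ⨅ p : ℤ, |y - (p : ℝ)|

/-- The distance from a real number `y` to the nearest integer coprime to `q`:
`‖y‖' = min {|y - p| : p ∈ ℤ, gcd(p,q) = 1}`. -/
noncomputable def distNearestCoprime (q : ℕ) (y : ℝ) : ℝ :=
  sInf {d : ℝ | ∃ p : ℤ, Int.gcd p (q : ℤ) = 1 ∧ d = |y - (p : ℝ)|}

/-- The multiplicative approximation set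
`S^×_n(ψ) = {x ∈ [0,1]^n : ∏ᵢ ‖q xᵢ‖ < ψ(q) for infinitely many q ∈ ℕ}`. -/
def Smul (n : ℕ) (ψ : ℕ → ℝ) : Set (Fin n → ℝ) :=
  {x | (∀ i, x i ∈ Set.Icc (0 : ℝ) 1) ∧
    {q : ℕ | 0 < q ∧ ∏ i, distNearestInt (q * x i) < ψ q}.Infinite}

/-- The multiplicative approximation set with the coprimality condition:
`D^×_n(ψ) = {x ∈ [0,1]^n : ∏ᵢ ‖q xᵢ‖' < ψ(q) for infinitely many q ∈ ℕ}`. -/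
def Dmul (n : ℕ) (ψ : ℕ → ℝ) : Set (Fin n → ℝ) :=
  {x | (∀ i, x i ∈ Set.Icc (0 : ℝ) 1) ∧
    {q : ℕ | 0 < q ∧ ∏ i, distNearestCoprime q (q * x i) < ψ q}.Infinite}

/-!
The distances `‖q x‖` and `‖q x‖'` are `q` times the distance on the circle from `x` to the
`q`-torsion, respectively to the points of exact order `q`. For fixed `x₁`, the condition
`∏ i, ‖q xᵢ‖ < ψ q` is the same condition in the remaining coordinates with `ψ q / ‖q x₁‖` in place
of `ψ q`, and conversely; a set almost all of whose fibres in both coordinate directions are null or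
conull is itself null or conull. By induction this cross-fibering argument of Beresnevich, Haynes
and Velani reduces the theorem to one dimension, for arbitrary `ψ`.

On the circle, if `ψ q / q → 0` the zero-one law is Gallagher's theorem for exact orders, and for
torsion it follows from ergodicity of the doubling map, which turns the radii `δ q` into `2 * δ q`
and so preserves the limsup set up to null sets. If `ψ q / q` does not tend to `0`, every point
satisfies the condition, because the points of order `q` become dense: any `2 ^ ω(q)` consecutive
integers contain one coprime to `q` (Kanold), and `2 ^ ω(q) / q → 0`.
-/

open Metric
open scoped ENNReal Topology

section Coprime

open Finset Polynomial

lemma sum_mul_pow_eq_zero {ι R : Type*} [CommRing R] (s : Finset ι) (c b : ι → R)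
    (h : ∀ j < #s, ∑ i ∈ s, c i * b i ^ j = 0) (m : ℕ) : ∑ i ∈ s, c i * b i ^ m = 0 := by
  nontriviality R
  obtain rfl | hs := s.eq_empty_or_nonempty
  · exact sum_empty
  let P : R[X] := ∏ i ∈ s, (X - C (b i))
  have hP : P.Monic := monic_prod_of_monic _ _ fun i _ => monic_X_sub_C _
  have hdeg : P.natDegree = #s := natDegree_finsetProd_X_sub_C_eq_card s b
  have hrem : (X ^ m %ₘ P).natDegree < #s :=
    hdeg ▸ natDegree_modByMonic_lt _ hP fun h1 => by simp [h1, hs.card_ne_zero.symm] at hdeg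
  have hpow (i : ι) (hi : i ∈ s) :
      b i ^ m = ∑ j ∈ range #s, (X ^ m %ₘ P).coeff j * b i ^ j := by
    have hroot : P.eval₂ (RingHom.id R) (b i) = 0 := by
      rw [eval₂_id, eval_prod]
      exact prod_eq_zero hi (by simp)
    rw [← eval_eq_sum_range' hrem, ← eval₂_id, eval₂_modByMonic_eq_self_of_root hroot]
    simp
  calc ∑ i ∈ s, c i * b i ^ m
      = ∑ i ∈ s, ∑ j ∈ range #s, (X ^ m %ₘ P).coeff j * (c i * b i ^ j) :=
        sum_congr rfl fun i hi => by
          rw [hpow i hi, mul_sum]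
          exact sum_congr rfl fun j _ => mul_left_comm _ _ _
    _ = ∑ j ∈ range #s, (X ^ m %ₘ P).coeff j * ∑ i ∈ s, c i * b i ^ j := by
        simp only [mul_sum]
        exact sum_comm
    _ = 0 := sum_eq_zero fun j hj => by rw [h j (mem_range.1 hj), mul_zero]

-- Expanded over the subsets of `s`, the product is an exponential sum in `m` with `2 ^ #s` terms.
lemma prod_one_sub_mul_pow_eq_zero {ι R : Type*} [CommRing R] (s : Finset ι) (c b : ι → R)
    (h : ∀ j < 2 ^ #s, ∏ i ∈ s, (1 - c i * b i ^ j) = 0) (m : ℕ) :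
    ∏ i ∈ s, (1 - c i * b i ^ m) = 0 := by
  have hexpand (j : ℕ) : ∏ i ∈ s, (1 - c i * b i ^ j) =
      ∑ t ∈ s.powerset, (∏ i ∈ t, -c i) * (∏ i ∈ t, b i) ^ j := by
    simp only [sub_eq_add_neg, prod_one_add, ← neg_mul, prod_mul_distrib, prod_pow]
  rw [hexpand]
  refine sum_mul_pow_eq_zero _ _ _ (fun j hj => ?_) m
  rw [← hexpand]
  exact h j (by rwa [card_powerset] at hj)

lemma exists_lt_two_pow_card_forall_not_dvd (s : Finset ℕ) (hs : ∀ n ∈ s, 1 < n) (a : ℤ) :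
    ∃ j : ℕ, j < 2 ^ #s ∧ ∀ n ∈ s, ¬ (n : ℤ) ∣ a + j := by
  have hs0 (n : ℕ) (hn : n ∈ s) : n ≠ 0 := (zero_lt_one.trans (hs n hn)).ne'
  -- For roots of unity `ζ n` of exact order `n`, `∏ (1 - ζ n ^ m)` vanishes iff some `n ∣ m`.
  let ζ (n : ℕ) : ℂ := Complex.exp (2 * Real.pi * Complex.I / n)
  have hζ (n : ℕ) (hn : n ∈ s) : IsPrimitiveRoot (ζ n) n :=
    Complex.isPrimitiveRoot_exp n (hs0 n hn)
  have hprod (m : ℕ) : ∏ n ∈ s, (1 - ζ n ^ a * ζ n ^ m) = 0 ↔ ∃ n ∈ s, (n : ℤ) ∣ a + m := by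
    refine prod_eq_zero_iff.trans (exists_congr fun n => and_congr_right fun hn => ?_)
    rw [← zpow_natCast, ← zpow_add₀ (Complex.exp_ne_zero _), sub_eq_zero, eq_comm,
      (hζ n hn).zpow_eq_one_iff_dvd]
  by_contra! hall
  let Q : ℤ := ∏ n ∈ s, (n : ℤ)
  have hQ : Q ≠ 0 := prod_ne_zero_iff.2 fun n hn => Nat.cast_ne_zero.2 (hs0 n hn)
  obtain ⟨m, hm⟩ := Int.eq_ofNat_of_zero_le (Int.emod_nonneg (1 - a) hQ)
  have hvanish := prod_one_sub_mul_pow_eq_zero s _ ζ (fun j hj => (hprod j).2 (hall j hj)) m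
  obtain ⟨n, hn, hdvd⟩ := (hprod m).1 hvanish
  have hmod : (n : ℤ) ∣ a + m - 1 := by
    refine (dvd_prod_of_mem _ hn).trans (?_ : Q ∣ _)
    rw [← hm, show a + (1 - a) % Q - 1 = (1 - a) % Q - (1 - a) by ring]
    exact (Int.mod_modEq _ _).symm.dvd
  have hdvd_one : (n : ℤ) ∣ 1 := by simpa using dvd_sub hdvd hmod
  have := hs n hn
  have := Int.le_of_dvd one_pos hdvd_one
  omega

lemma pow_card_primeFactors_le_pow_mul {k q : ℕ} (hk : 0 < k) (hq : q ≠ 0) :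
    k ^ #q.primeFactors ≤ k ^ k * q := by
  have hsmall : ∏ p ∈ q.primeFactors with p < k, k ≤ k ^ k := by
    rw [prod_const]
    refine Nat.pow_le_pow_right hk ((card_le_card fun p hp => ?_).trans_eq (card_range k))
    exact mem_range.2 (mem_filter.1 hp).2
  have hlarge : ∏ p ∈ q.primeFactors with ¬ p < k, k ≤ q :=
    calc ∏ p ∈ q.primeFactors with ¬ p < k, k
        ≤ ∏ p ∈ q.primeFactors with ¬ p < k, p :=
          prod_le_prod' fun p hp => not_lt.1 (mem_filter.1 hp).2
      _ ≤ ∏ p ∈ q.primeFactors, p :=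
          prod_le_prod_of_subset_of_one_le' (filter_subset _ _) fun p hp _ =>
            (Nat.prime_of_mem_primeFactors hp).one_le
      _ ≤ q := Nat.le_of_dvd hq.bot_lt (Nat.prod_primeFactors_dvd q)
  calc k ^ #q.primeFactors = ∏ _ ∈ q.primeFactors, k := (prod_const k).symm
    _ = (∏ p ∈ q.primeFactors with p < k, k) * ∏ p ∈ q.primeFactors with ¬ p < k, k :=
        (prod_filter_mul_prod_filter_not _ _ _).symm
    _ ≤ k ^ k * q := Nat.mul_le_mul hsmall hlarge

lemma tendsto_two_pow_card_primeFactors_div_atTop :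
    Tendsto (fun q : ℕ => (2 : ℝ) ^ #q.primeFactors / q) atTop (𝓝 0) := by
  have hlim : Tendsto (fun q : ℕ => 16 / √(q : ℝ)) atTop (𝓝 0) :=
    tendsto_const_nhds.div_atTop (Real.tendsto_sqrt_atTop.comp tendsto_natCast_atTop_atTop)
  refine squeeze_zero' (.of_forall fun q => by positivity) ?_ hlim
  filter_upwards [eventually_ne_atTop 0] with q hq
  have hsq : ((2 : ℝ) ^ #q.primeFactors) ^ 2 ≤ 16 ^ 2 * q :=
    calc ((2 : ℝ) ^ #q.primeFactors) ^ 2 = 4 ^ #q.primeFactors := by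
          rw [pow_right_comm]
          norm_num
      _ ≤ 4 ^ 4 * q := by exact_mod_cast pow_card_primeFactors_le_pow_mul four_pos hq
      _ = 16 ^ 2 * q := by norm_num
  have hle : (2 : ℝ) ^ #q.primeFactors ≤ 16 * √q := by
    simpa using Real.le_sqrt_of_sq_le hsq
  calc (2 : ℝ) ^ #q.primeFactors / q ≤ 16 * √q / q := by gcongr
    _ = 16 / √q := by rw [mul_div_assoc, Real.sqrt_div_self, ← div_eq_mul_inv]

lemma exists_gcd_eq_one_abs_sub_lt {q : ℕ} (hq : q ≠ 0) (y : ℝ) :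
    ∃ p : ℤ, Int.gcd p q = 1 ∧ |y - p| < 2 ^ #q.primeFactors := by
  obtain ⟨j, hj, hdvd⟩ := exists_lt_two_pow_card_forall_not_dvd q.primeFactors
    (fun p hp => (Nat.prime_of_mem_primeFactors hp).one_lt) ⌊y⌋
  refine ⟨⌊y⌋ + j, ?_, ?_⟩
  · by_contra hgcd
    obtain ⟨r, hr, hrd⟩ := Nat.exists_prime_and_dvd hgcd
    have hrd' := Int.natCast_dvd_natCast.2 hrd
    have hrq : r ∣ q := Int.natCast_dvd_natCast.1 (hrd'.trans (Int.gcd_dvd_right ..))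
    exact hdvd r (Nat.mem_primeFactors.2 ⟨hr, hrq, hq⟩) (hrd'.trans (Int.gcd_dvd_left ..))
  · have hj' : (j : ℝ) + 1 ≤ 2 ^ #q.primeFactors := by exact_mod_cast hj
    have := Int.floor_le y
    have := Int.lt_floor_add_one y
    push_cast
    rw [abs_lt]
    constructor <;> linarith [j.cast_nonneg (α := ℝ)]

end Coprime

section Distance

lemma infEDist_addCircle_coe {a : ℝ} (x : ℝ) (T : Set (AddCircle a)) :
    infEDist (x : AddCircle a) T = infEDist x (((↑) : ℝ → AddCircle a) ⁻¹' T) := by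
  refine le_antisymm (le_infEDist.2 fun y hy => ?_) (le_infEDist.2 fun u hu => ?_)
  · refine (infEDist_le_edist_of_mem (Set.mem_preimage.1 hy)).trans ?_
    rw [edist_dist, edist_dist, dist_eq_norm, dist_eq_norm, ← AddCircle.coe_sub]
    exact ENNReal.ofReal_le_ofReal QuotientAddGroup.norm_mk_le_norm
  · refine le_of_forall_gt fun r hr => ?_
    obtain ⟨r', -, hlt, hr'⟩ := ENNReal.lt_iff_exists_real_btwn.1 hr
    rw [edist_lt_ofReal, dist_eq_norm] at hlt
    obtain ⟨z, hz, hzr⟩ := QuotientAddGroup.norm_lt_iff.1 hlt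
    have hzu : (z : AddCircle a) = x - u := hz
    have hmem : x - z ∈ ((↑) : ℝ → AddCircle a) ⁻¹' T := by
      rwa [Set.mem_preimage, AddCircle.coe_sub, hzu, sub_sub_cancel]
    refine (infEDist_le_edist_of_mem hmem).trans_lt (hr'.trans' ?_)
    rwa [edist_lt_ofReal, dist_eq_norm, sub_sub_cancel]

lemma nsmul_unitAddCircle_coe_eq_zero_iff (q : ℕ) (s : ℝ) :
    q • (s : UnitAddCircle) = 0 ↔ ∃ p : ℤ, p = q * s := by
  rw [← AddCircle.coe_nsmul, AddCircle.coe_eq_zero_iff]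
  simp

lemma addOrderOf_unitAddCircle_coe_eq_iff {q : ℕ} (hq : q ≠ 0) (s : ℝ) :
    addOrderOf (s : UnitAddCircle) = q ↔ ∃ p : ℤ, Int.gcd p q = 1 ∧ p = q * s := by
  have hq0 : (q : ℝ) ≠ 0 := Nat.cast_ne_zero.2 hq
  constructor
  · rintro rfl
    obtain ⟨p, hp⟩ := (nsmul_unitAddCircle_coe_eq_zero_iff _ s).1 (addOrderOf_nsmul_eq_zero _)
    obtain ⟨r, rfl⟩ : ∃ r : ℚ, r = s :=
      ⟨p / addOrderOf (s : UnitAddCircle), by push_cast; rw [hp, mul_div_cancel_left₀ _ hq0]⟩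
    have hden : addOrderOf ((r : ℝ) : UnitAddCircle) = r.den := by
      simpa using AddCircle.addOrderOf_coe_rat (p := (1 : ℝ)) (q := r)
    rw [hden]
    exact ⟨r.num, r.reduced, by exact_mod_cast r.den_mul_eq_num.symm⟩
  · rintro ⟨p, hgcd, hp⟩
    have hs : s = p / q * 1 := by rw [hp, mul_div_cancel_left₀ _ hq0, mul_one]
    rw [hs]
    exact AddCircle.addOrderOf_div_of_gcd_eq_one' hq.bot_lt hgcd

lemma mul_infEDist_unitAddCircle_coe {q : ℕ} (hq : q ≠ 0) (t : ℝ) {T : Set UnitAddCircle}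
    {P : Set ℤ} (hT : ∀ s : ℝ, (s : UnitAddCircle) ∈ T ↔ ∃ p ∈ P, (p : ℝ) = q * s) :
    q * infEDist (t : UnitAddCircle) T = infEDist (q * t) (((↑) : ℤ → ℝ) '' P) := by
  have hq0 : (q : ℝ) ≠ 0 := Nat.cast_ne_zero.2 hq
  have himage :
      ((↑) : ℤ → ℝ) '' P = (fun s : ℝ => q * s) '' (((↑) : ℝ → UnitAddCircle) ⁻¹' T) := by
    ext u
    simp only [Set.mem_image, Set.mem_preimage, hT]
    constructor
    · rintro ⟨p, hp, rfl⟩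
      exact ⟨p / q, ⟨p, hp, (mul_div_cancel₀ _ hq0).symm⟩, mul_div_cancel₀ _ hq0⟩
    · rintro ⟨s, ⟨p, hp, hps⟩, rfl⟩
      exact ⟨p, hp, hps⟩
  have hsmul := infEDist_smul₀ hq0 (((↑) : ℝ → UnitAddCircle) ⁻¹' T) t
  rw [infEDist_addCircle_coe, himage]
  simpa [ENNReal.smul_def, ← Set.image_smul] using hsmul.symm

lemma ofReal_distNearestInt (y : ℝ) :
    ENNReal.ofReal (distNearestInt y) = infEDist y (Set.range ((↑) : ℤ → ℝ)) := by
  simp only [distNearestInt, ENNReal.ofReal_iInf, infEDist, iInf_range, edist_dist, Real.dist_eq]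

lemma ofReal_distNearestCoprime (q : ℕ) (y : ℝ) :
    ENNReal.ofReal (distNearestCoprime q y) =
      infEDist y (((↑) : ℤ → ℝ) '' {p | Int.gcd p q = 1}) := by
  have : Nonempty {p : ℤ | Int.gcd p q = 1} := ⟨1, Int.one_gcd⟩
  have himage : {d : ℝ | ∃ p : ℤ, Int.gcd p q = 1 ∧ d = |y - p|} =
      (fun p : ℤ => |y - p|) '' {p | Int.gcd p q = 1} := by
    ext d
    simp only [Set.mem_image, Set.mem_ofPred_eq, eq_comm]
  rw [distNearestCoprime, himage, sInf_image', ENNReal.ofReal_iInf]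
  simp only [infEDist, iInf_image, edist_dist, Real.dist_eq, iInf_subtype']

lemma ofReal_distNearestInt_natCast_mul {q : ℕ} (hq : q ≠ 0) (t : ℝ) :
    ENNReal.ofReal (distNearestInt (q * t)) = q * infEDist (t : UnitAddCircle) {y | q • y = 0} := by
  rw [ofReal_distNearestInt, ← Set.image_univ]
  refine (mul_infEDist_unitAddCircle_coe hq t fun s => ?_).symm
  simpa using nsmul_unitAddCircle_coe_eq_zero_iff q s

lemma ofReal_distNearestCoprime_natCast_mul {q : ℕ} (hq : q ≠ 0) (t : ℝ) :
    ENNReal.ofReal (distNearestCoprime q (q * t)) =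
      q * infEDist (t : UnitAddCircle) {y | addOrderOf y = q} := by
  rw [ofReal_distNearestCoprime]
  exact (mul_infEDist_unitAddCircle_coe hq t (addOrderOf_unitAddCircle_coe_eq_iff hq)).symm

end Distance

section ZeroOne

lemma measurableSet_frequently_atTop {α : Type*} [MeasurableSpace α] {p : ℕ → α → Prop}
    (hp : ∀ q, MeasurableSet {x | p q x}) : MeasurableSet {x | ∃ᶠ q in atTop, p q x} := by
  have hlimsup : {x | ∃ᶠ q in atTop, p q x} = limsup (fun q => {x | p q x}) atTop := by
    ext x
    exact mem_limsup_iff_frequently_mem.symm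
  exact hlimsup ▸ .measurableSet_limsup hp

lemma eventuallyConst_ae_prod {α β : Type*} [MeasurableSpace α] [MeasurableSpace β]
    {μ : Measure α} {ν : Measure β} [SFinite μ] [SFinite ν] {p : α × β → Prop}
    (hp : MeasurableSet {z | p z}) (hleft : ∀ᵐ x ∂μ, EventuallyConst (fun y => p (x, y)) (ae ν))
    (hright : ∀ᵐ y ∂ν, EventuallyConst (fun x => p (x, y)) (ae μ)) :
    EventuallyConst p (ae (μ.prod ν)) := by
  obtain rfl | hν := eq_zero_or_neZero ν
  · simp
  let r (x : α) : Prop := ∀ᵐ y ∂ν, p (x, y)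
  have hr : MeasurableSet {x | r x} :=
    measurable_measure_prodMk_left hp.compl (measurableSet_singleton 0)
  have hmeas : MeasurableSet {z : α × β | p z ↔ r z.1} := hp.iff (measurable_fst hr)
  have hiff : ∀ᵐ x ∂μ, ∀ᵐ y ∂ν, (p (x, y) ↔ r x) := by
    filter_upwards [hleft] with x hx
    rcases eventuallyConst_pred.1 hx with hpos | hneg
    · exact hpos.mono fun y hy => iff_of_true hy hpos
    · have hrx : ¬ r x := fun h => (h.and hneg).exists.elim fun y hy => hy.2 hy.1
      exact hneg.mono fun y hy => iff_of_false hy hrx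
  obtain ⟨y, hy, hyr⟩ := (hright.and ((Measure.ae_ae_comm hmeas).1 hiff)).exists
  have hrconst : EventuallyConst r (ae μ) := hy.congr (hyr.mono fun x hx => propext hx)
  have hpr : p =ᵐ[μ.prod ν] r ∘ Prod.fst :=
    ((Measure.ae_prod_iff_ae_ae hmeas).2 hiff).mono fun z hz => propext hz
  exact (hrconst.comp_tendsto Measure.quasiMeasurePreserving_fst.tendsto_ae).congr hpr.symm

lemma eventuallyConst_ae_pi_frequently_prod_lt {n : ℕ} {α : Fin n → Type*}
    [∀ i, MeasurableSpace (α i)] (μ : ∀ i, Measure (α i)) [∀ i, SigmaFinite (μ i)]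
    {d : ∀ i, ℕ → α i → ℝ≥0∞} (hd : ∀ i q, Measurable (d i q)) (hd_top : ∀ i q x, d i q x ≠ ∞)
    (hconst : ∀ i (ψ : ℕ → ℝ≥0∞),
      EventuallyConst (fun x => ∃ᶠ q in atTop, d i q x < ψ q) (ae (μ i)))
    (ψ : ℕ → ℝ≥0∞) :
    EventuallyConst (fun x => ∃ᶠ q in atTop, ∏ i, d i q (x i) < ψ q) (ae (Measure.pi μ)) := by
  induction n generalizing ψ with
  | zero => exact .of_subsingleton_left
  | succ n ih =>
    let D (q : ℕ) (y : ∀ j : Fin n, α j.succ) : ℝ≥0∞ := ∏ j, d j.succ q (y j)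
    have hD_top (q : ℕ) (y : ∀ j : Fin n, α j.succ) : D q y ≠ ∞ :=
      ENNReal.prod_ne_top fun j _ => hd_top _ _ _
    let p (z : α 0 × ∀ j : Fin n, α j.succ) : Prop := ∃ᶠ q in atTop, d 0 q z.1 * D q z.2 < ψ q
    have hp : MeasurableSet {z | p z} := measurableSet_frequently_atTop fun q =>
      measurableSet_lt (by fun_prop) measurable_const
    have hleft (x : α 0) :
        EventuallyConst (fun y => p (x, y)) (ae (Measure.pi fun j => μ j.succ)) := by
      have h : EventuallyConst (fun y => ∃ᶠ q in atTop, D q y < ψ q / d 0 q x) _ :=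
        ih (fun j => μ j.succ) (fun j => hd j.succ) (fun j => hd_top j.succ)
          (fun j => hconst j.succ) (fun q => ψ q / d 0 q x)
      simpa only [p, ENNReal.lt_div_iff_mul_lt (.inr (hD_top _ _)) (.inl (hd_top _ _ _)),
        mul_comm (d 0 _ x)] using h
    have hright (y : ∀ j : Fin n, α j.succ) : EventuallyConst (fun x => p (x, y)) (ae (μ 0)) := by
      have h := hconst 0 (fun q => ψ q / D q y)
      simpa only [ENNReal.lt_div_iff_mul_lt (.inr (hd_top _ _ _)) (.inl (hD_top _ _))] using h
    have hpconst := eventuallyConst_ae_prod hp (ae_of_all _ hleft) (ae_of_all _ hright)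
    have hsplit := (measurePreserving_piFinSuccAbove μ 0).quasiMeasurePreserving.tendsto_ae
    simp only [Fin.prod_univ_succ]
    exact hpconst.comp_tendsto hsplit

lemma eventuallyConst_frequently_infEDist_lt {X : Type*} [PseudoEMetricSpace X]
    {l : Filter X} {T : ℕ → Set X}
    (hdense : Tendsto (fun q => ⨆ x, infEDist x (T q)) atTop (𝓝 0))
    (hconst : ∀ δ : ℕ → ℝ, Tendsto δ atTop (𝓝 0) →
      EventuallyConst (fun x => ∃ᶠ q in atTop, x ∈ thickening (δ q) (T q)) l)
    (ψ : ℕ → ℝ≥0∞) :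
    EventuallyConst (fun x => ∃ᶠ q in atTop, infEDist x (T q) < ψ q) l := by
  by_cases hψ : Tendsto ψ atTop (𝓝 0)
  · have hδ : Tendsto (fun q => (ψ q).toReal) atTop (𝓝 0) :=
      (ENNReal.tendsto_toReal ENNReal.zero_ne_top).comp hψ
    refine (hconst _ hδ).congr (.of_forall fun x => propext (frequently_congr ?_))
    filter_upwards [hψ.eventually_ne ENNReal.zero_ne_top] with q hq
    rw [mem_thickening_iff_infEDist_lt, ENNReal.ofReal_toReal hq]
  · obtain ⟨ε, hε, hεψ⟩ : ∃ ε > 0, ∃ᶠ q in atTop, ε < ψ q := by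
      simpa only [ENNReal.tendsto_nhds_zero, not_forall, not_eventually, not_le, exists_prop]
        using hψ
    refine eventuallyConst_pred.2 (.inl (.of_forall fun x => ?_))
    refine (hεψ.and_eventually (hdense.eventually_lt_const hε)).mono fun q hq => ?_
    exact (le_iSup (fun x => infEDist x (T q)) x).trans_lt (hq.2.trans hq.1)

lemma measure_eq_one_of_eventuallyConst {α : Type*} [MeasurableSpace α] {μ : Measure α}
    [IsProbabilityMeasure μ] {s : Set α} (hs : EventuallyConst s (ae μ)) (hpos : 0 < μ s) :
    μ s = 1 := by
  rcases eventuallyConst_set.1 hs with hmem | hnotMem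
  · exact (measure_congr (eventuallyEq_univ.2 hmem)).trans measure_univ
  · exact absurd (measure_eq_zero_iff_ae_notMem.2 hnotMem) hpos.ne'

end ZeroOne

section OneDimensional

variable {a : ℝ} [Fact (0 < a)] {δ : ℕ → ℝ}

lemma eventuallyConst_frequently_mem_thickening_addOrderOf (hδ : Tendsto δ atTop (𝓝 0)) :
    EventuallyConst
      (fun x : AddCircle a => ∃ᶠ q in atTop, x ∈ thickening (δ q) {y | addOrderOf y = q})
      (ae volume) := by
  have hmem (x : AddCircle a) : x ∈ addWellApproximable (AddCircle a) δ ↔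
      ∃ᶠ q in atTop, x ∈ thickening (δ q) {y | addOrderOf y = q} := by
    rw [mem_add_wellApproximable_iff, blimsup_eq_limsup,
      inf_eq_left.2 (le_principal_iff.2 (eventually_gt_atTop 0)), mem_limsup_iff_frequently_mem]
    rfl
  have hgallagher := AddCircle.addWellApproximable_ae_empty_or_univ (T := a) δ hδ
  simp only [hmem] at hgallagher
  exact eventuallyConst_pred.2 hgallagher.symm

lemma eventuallyConst_frequently_mem_thickening_nsmul_eq_zero (hδ : Tendsto δ atTop (𝓝 0)) :
    EventuallyConst
      (fun x : AddCircle a => ∃ᶠ q in atTop, x ∈ thickening (δ q) {y | q • y = 0})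
      (ae volume) := by
  let E (r : ℕ → ℝ) : Set (AddCircle a) := limsup (fun q => thickening (r q) {y | q • y = 0}) atTop
  have hmem {r : ℕ → ℝ} {x : AddCircle a} :
      x ∈ E r ↔ ∃ᶠ q in atTop, x ∈ thickening (r q) {y | q • y = 0} :=
    mem_limsup_iff_frequently_mem
  have hmeas : MeasurableSet (E δ) :=
    .measurableSet_limsup fun _ => isOpen_thickening.measurableSet
  have himage : (fun x : AddCircle a => 2 • x) '' E δ ⊆ E (fun q => 2 * δ q) := by
    rintro _ ⟨x, hx, rfl⟩
    refine hmem.2 ((hmem.1 hx).mono fun q hq => ?_)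
    obtain ⟨y, hy, hxy⟩ := mem_thickening_iff.1 hq
    refine mem_thickening_iff.2 ⟨2 • y, ?_, ?_⟩
    · have hqy : q • y = 0 := hy
      rw [Set.mem_ofPred_eq, nsmul_left_comm, hqy, nsmul_zero]
    · calc dist (2 • x) (2 • y) = ‖2 • (x - y)‖ := by rw [dist_eq_norm, nsmul_sub]
        _ ≤ 2 * ‖x - y‖ := by simpa using norm_nsmul_le (n := 2) (a := x - y)
        _ < 2 * δ q := by rw [← dist_eq_norm]; gcongr
  have hscale : E (fun q => 2 * δ q) =ᵐ[volume] E δ := by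
    simpa only [blimsup_true] using
      blimsup_thickening_mul_ae_eq volume (fun _ => True) (fun q => {y | q • y = 0}) two_pos δ hδ
  have hE := (AddCircle.ergodic_nsmul one_lt_two).ae_empty_or_univ_of_image_ae_le
    hmeas.nullMeasurableSet (himage.eventuallyLE.trans hscale.le)
  exact (eventuallyConst_set'.2 hE).congr (.of_forall fun x => propext hmem)

lemma iSup_infEDist_addOrderOf_le {q : ℕ} (hq : q ≠ 0) :
    ⨆ x : UnitAddCircle, infEDist x {y | addOrderOf y = q} ≤
      ENNReal.ofReal (2 ^ q.primeFactors.card / q) := by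
  refine iSup_le fun x => ?_
  obtain ⟨t, rfl⟩ := QuotientAddGroup.mk_surjective x
  obtain ⟨p, hp, hlt⟩ := exists_gcd_eq_one_abs_sub_lt hq (q * t)
  have hq0 : (0 : ℝ) < q := Nat.cast_pos.2 hq.bot_lt
  rw [ENNReal.ofReal_div_of_pos hq0, ENNReal.ofReal_natCast,
    ENNReal.le_div_iff_mul_le (.inl (by simpa)) (.inl (by simp)), mul_comm]
  refine (mul_infEDist_unitAddCircle_coe hq t (addOrderOf_unitAddCircle_coe_eq_iff hq)).trans_le ?_
  have hmem : (p : ℝ) ∈ ((↑) : ℤ → ℝ) '' {p | Int.gcd p q = 1} := ⟨p, hp, rfl⟩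
  refine (infEDist_le_edist_of_mem hmem).trans ?_
  rw [edist_dist, Real.dist_eq]
  exact ENNReal.ofReal_le_ofReal hlt.le

lemma tendsto_iSup_infEDist_addOrderOf :
    Tendsto (fun q : ℕ => ⨆ x : UnitAddCircle, infEDist x {y | addOrderOf y = q})
      atTop (𝓝 0) := by
  have hlim := ENNReal.tendsto_ofReal tendsto_two_pow_card_primeFactors_div_atTop
  rw [ENNReal.ofReal_zero] at hlim
  refine tendsto_of_tendsto_of_tendsto_of_le_of_le' tendsto_const_nhds hlim
    (.of_forall fun _ => zero_le) ?_
  filter_upwards [eventually_ne_atTop 0] with q hq using iSup_infEDist_addOrderOf_le hq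

lemma tendsto_iSup_infEDist_nsmul_eq_zero :
    Tendsto (fun q : ℕ => ⨆ x : UnitAddCircle, infEDist x {y | q • y = 0}) atTop (𝓝 0) := by
  refine tendsto_of_tendsto_of_tendsto_of_le_of_le tendsto_const_nhds
    tendsto_iSup_infEDist_addOrderOf (fun _ => zero_le) fun q => ?_
  have hsubset : {y : UnitAddCircle | addOrderOf y = q} ⊆ {y | q • y = 0} := by
    rintro y rfl
    exact addOrderOf_nsmul_eq_zero y
  exact iSup_mono fun x => infEDist_anti hsubset

end OneDimensional

section Torus

/-- The points `x` of the torus for which `∏ i, q * dist (x i) (T q) < ψ q` for infinitely many `q`.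
For `T q` the points of order `q`, respectively the `q`-torsion points, this is the image in the
torus of `Dmul`, respectively `Smul`. -/
def torusMulApprox (T : ℕ → Set UnitAddCircle) (n : ℕ) (ψ : ℕ → ℝ≥0∞) :
    Set (Fin n → UnitAddCircle) :=
  {x | ∃ᶠ q in atTop, ∏ i, (q * infEDist (x i) (T q)) < ψ q}

instance : IsProbabilityMeasure (volume : Measure UnitAddCircle) := ⟨UnitAddCircle.measure_univ⟩

variable {T : ℕ → Set UnitAddCircle} {n : ℕ}

lemma measurableSet_torusMulApprox (ψ : ℕ → ℝ≥0∞) : MeasurableSet (torusMulApprox T n ψ) :=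
  measurableSet_frequently_atTop fun q => measurableSet_lt (by fun_prop) measurable_const

lemma eventuallyConst_torusMulApprox (hT : ∀ q ≠ 0, (T q).Nonempty)
    (hdense : Tendsto (fun q => ⨆ x, infEDist x (T q)) atTop (𝓝 0))
    (hconst : ∀ δ : ℕ → ℝ, Tendsto δ atTop (𝓝 0) →
      EventuallyConst (fun x => ∃ᶠ q in atTop, x ∈ thickening (δ q) (T q)) (ae volume))
    (ψ : ℕ → ℝ≥0∞) : EventuallyConst (torusMulApprox T n ψ) (ae volume) := by
  have htop (q : ℕ) (x : UnitAddCircle) : q * infEDist x (T q) ≠ ∞ := by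
    obtain rfl | hq := eq_or_ne q 0
    · simp
    · exact ENNReal.mul_ne_top (ENNReal.natCast_ne_top q) (infEDist_ne_top (hT q hq))
  refine eventuallyConst_ae_pi_frequently_prod_lt (fun _ => volume)
    (d := fun _ q x => q * infEDist x (T q)) (fun _ _ => by fun_prop) (fun _ => htop)
    (fun _ φ => ?_) ψ
  refine (eventuallyConst_frequently_infEDist_lt hdense hconst fun q => φ q / q).congr
    (.of_forall fun x => propext (frequently_congr ?_))
  filter_upwards [eventually_ne_atTop 0] with q hq
  rw [ENNReal.lt_div_iff_mul_lt (.inl (by simpa)) (.inl (by simp)), mul_comm]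

lemma setOf_infinite_prod_lt_eq {d : ℕ → ℝ → ℝ} (hd_nonneg : ∀ q t, 0 ≤ d q t)
    (hd : ∀ q ≠ 0, ∀ t : ℝ, ENNReal.ofReal (d q (q * t)) = q * infEDist (t : UnitAddCircle) (T q))
    (ψ : ℕ → ℝ) :
    {x : Fin n → ℝ | {q : ℕ | 0 < q ∧ ∏ i, d q (q * x i) < ψ q}.Infinite} =
      (fun x i => (x i : UnitAddCircle)) ⁻¹' torusMulApprox T n fun q => ENNReal.ofReal (ψ q) := by
  ext x
  rw [Set.mem_ofPred_eq, ← Nat.frequently_atTop_iff_infinite]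
  refine frequently_congr ?_
  filter_upwards [eventually_ne_atTop 0] with q hq
  have hprod : ENNReal.ofReal (∏ i, d q (q * x i)) =
      ∏ i, (q * infEDist (x i : UnitAddCircle) (T q)) := by
    rw [ENNReal.ofReal_prod_of_nonneg fun i _ => hd_nonneg _ _]
    exact Finset.prod_congr rfl fun i _ => hd q hq (x i)
  rw [and_iff_right (Nat.pos_of_ne_zero hq), ← hprod,
    ENNReal.ofReal_lt_ofReal_iff_of_nonneg (Finset.prod_nonneg fun i _ => hd_nonneg _ _)]

lemma volume_pi_Icc_inter_preimage_coe {A : Set (Fin n → UnitAddCircle)} (hA : MeasurableSet A) :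
    volume ({x : Fin n → ℝ | ∀ i, x i ∈ Set.Icc (0 : ℝ) 1} ∩
      (fun x i => (x i : UnitAddCircle)) ⁻¹' A) = volume A := by
  have hmk : MeasurePreserving ((↑) : ℝ → UnitAddCircle) (volume.restrict (Set.Icc 0 1)) := by
    have h := UnitAddCircle.measurePreserving_mk 0
    rwa [zero_add, restrict_Ioc_eq_restrict_Icc] at h
  have hpi := measurePreserving_pi (fun _ : Fin n => volume.restrict (Set.Icc (0 : ℝ) 1))
    (fun _ => volume) fun _ => hmk
  rw [← Measure.restrict_pi_pi] at hpi
  have hcube : {x : Fin n → ℝ | ∀ i, x i ∈ Set.Icc (0 : ℝ) 1} =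
      Set.univ.pi fun _ => Set.Icc 0 1 := by
    ext x
    exact Set.mem_univ_pi.symm
  have hpre : MeasurableSet ((fun (x : Fin n → ℝ) i => (x i : UnitAddCircle)) ⁻¹' A) :=
    hpi.measurable hA
  rw [hcube, Set.inter_comm, ← Measure.restrict_apply hpre]
  exact hpi.measure_preimage hA.nullMeasurableSet

lemma volume_Dmul (ψ : ℕ → ℝ) : volume (Dmul n ψ) =
    volume (torusMulApprox (fun q => {y | addOrderOf y = q}) n fun q => ENNReal.ofReal (ψ q)) := by
  have hnonneg (q : ℕ) (t : ℝ) : 0 ≤ distNearestCoprime q t :=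
    Real.sInf_nonneg fun _ ⟨_, _, hd⟩ => hd ▸ abs_nonneg _
  rw [← volume_pi_Icc_inter_preimage_coe (measurableSet_torusMulApprox _),
    ← setOf_infinite_prod_lt_eq hnonneg fun q hq => ofReal_distNearestCoprime_natCast_mul hq]
  rfl

lemma volume_Smul (ψ : ℕ → ℝ) : volume (Smul n ψ) =
    volume (torusMulApprox (fun q => {y | q • y = 0}) n fun q => ENNReal.ofReal (ψ q)) := by
  have hnonneg (t : ℝ) : 0 ≤ distNearestInt t := Real.iInf_nonneg fun _ => abs_nonneg _
  rw [← volume_pi_Icc_inter_preimage_coe (measurableSet_torusMulApprox _),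
    ← setOf_infinite_prod_lt_eq (fun _ => hnonneg) fun q hq => ofReal_distNearestInt_natCast_mul hq]
  rfl

end Torus

/-- If `|D^×_n(ψ)| > 0` then `|D^×_n(ψ)| = 1`, and if `|S^×_n(ψ)| > 0` then
`|S^×_n(ψ)| = 1`. -/
theorem positive_measure_implies_full (n : ℕ) (hn : 1 ≤ n)
    (ψ : ℕ → ℝ) (hψ : ∀ q, 0 ≤ ψ q) :
    (0 < volume (Dmul n ψ) → volume (Dmul n ψ) = 1) ∧
    (0 < volume (Smul n ψ) → volume (Smul n ψ) = 1) := by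
  rw [volume_Dmul, volume_Smul]
  have horder_nonempty (q : ℕ) (hq : q ≠ 0) : {y : UnitAddCircle | addOrderOf y = q}.Nonempty :=
    ⟨_, AddCircle.addOrderOf_period_div (Nat.pos_of_ne_zero hq)⟩
  have htorsion_nonempty (q : ℕ) : {y : UnitAddCircle | q • y = 0}.Nonempty := ⟨0, nsmul_zero q⟩
  exact ⟨measure_eq_one_of_eventuallyConst <|
      eventuallyConst_torusMulApprox horder_nonempty tendsto_iSup_infEDist_addOrderOf
        (fun _ => eventuallyConst_frequently_mem_thickening_addOrderOf) _,
    measure_eq_one_of_eventuallyConst <|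
      eventuallyConst_torusMulApprox (fun q _ => htorsion_nonempty q)
        tendsto_iSup_infEDist_nsmul_eq_zero
        (fun _ => eventuallyConst_frequently_mem_thickening_nsmul_eq_zero) _⟩
end
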